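/- Let n ≥ 1, let 1 < p ≤ 2, and let x, y be Hermitian n×n complex matrices. Then ‖x+y‖_p² + ‖x−y‖_p² ≥ 2‖x‖_p² + 2(p−1)‖y‖_p², where for a Hermitian matrix a, ‖a‖_p := (∑_{i=1}^n |λ_i(a)|^p)^{1/p} and λ_1(a), …, λ_n(a) are the eigenvalues of a counted with multiplicity. -/

import Mathlib

open scoped BigOperators

/-- The Schatten `p`-norm of a Hermitian matrix `a`, defined through its eigenvalues:
`‖a‖_p = (∑ i, |λ_i(a)|^p)^{1/p}` (junk value `0` on non-Hermitian matrices). -/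
noncomputable def hermitianSchattenNorm {n : ℕ} (p : ℝ) (a : Matrix (Fin n) (Fin n) ℂ) : ℝ :=
  if ha : a.IsHermitian then (∑ i, |ha.eigenvalues i| ^ p) ^ (1 / p) else 0

/-!
Let `F t` be the mean of `tr |x + t y|^p` and `tr |x - t y|^p`, and let `φ s = sgn(s)|s|^(p-1)`. By
Klein's inequality `F (t + δ) ≥ F t + (p/2) δ g t`, where
`g t = tr ((φ (x + t y) - φ (x - t y)) y)`. If
`g t * F t ^ (2/p - 1) ≥ 2 (p - 1) t ‖y‖_p ^ 2`, then `F ^ (2/p)` grows by at least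
`2 (p - 1) ‖y‖_p ^ 2 t δ` over each step, and refining the partition of `[0, 1]` gives
`F 1 ^ (2/p) ≥ ‖x‖_p ^ 2 + (p - 1) ‖y‖_p ^ 2`; convexity of `u ↦ u ^ (2/p)` then concludes.

The bound on `g` is the case `A = x + t y`, `C = x - t y` of
`tr ((φ A - φ C) (A - C)) * ((tr |A|^p + tr |C|^p) / 2) ^ (2/p - 1) ≥ (p - 1) ‖A - C‖_p ^ 2`. In
eigenbases of `A` and `C` the first trace is a weighted sum of `(φ a - φ c) (a - c)`, which is at
least `(p - 1) (a - c) ^ 2 T ^ (-(2/p - 1))` with `T = (|a|^p + |c|^p) / 2`. The numbers `T` form a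
diagonal operator on matrices; since `u ↦ u ^ (-α)` is operator convex (it is an integral of
resolvents), the sum decreases when `T` is compressed to the matrices that are diagonal in an
eigenbasis of `A - C`, and there Hölder's inequality applies.
-/

open Finset MeasureTheory Matrix

section RealPower

lemma rpow_add_mul_rpow_sub_one_le {r x y : ℝ} (hr : 1 ≤ r) (hx : 0 ≤ x) (hy : 0 ≤ y) :
    x ^ r + r * x ^ (r - 1) * (y - x) ≤ y ^ r := by
  rcases hx.eq_or_lt with rfl | hx
  · rcases hr.eq_or_lt with rfl | hr
    · simp
    · rw [Real.zero_rpow (by linarith), Real.zero_rpow (by linarith)]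
      simpa using Real.rpow_nonneg hy r
  have bernoulli : 1 + r * (y / x - 1) ≤ (y / x) ^ r := by
    simpa using one_add_mul_self_le_rpow_one_add (s := y / x - 1)
      (by linarith [div_nonneg hy hx.le]) hr
  calc x ^ r + r * x ^ (r - 1) * (y - x) = x ^ r * (1 + r * (y / x - 1)) := by
        rw [Real.rpow_sub_one hx.ne']; field_simp
    _ ≤ x ^ r * (y / x) ^ r := by gcongr
    _ = y ^ r := by rw [Real.div_rpow hy hx.le]; field_simp

lemma one_sub_mul_sub_one_le_rpow_neg {q x : ℝ} (hq0 : 0 ≤ q) (hq1 : q ≤ 1) (hx : 0 < x) :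
    1 - q * (x - 1) ≤ x ^ (-q) := by
  have bernoulli : x ^ q ≤ 1 + q * (x - 1) := by
    simpa using rpow_one_add_le_one_add_mul_self (s := x - 1) (by linarith) hq0 hq1
  have hpos : 0 < x ^ q := Real.rpow_pos_of_pos hx q
  rw [Real.rpow_neg hx.le, ← one_div, le_div_iff₀ hpos]
  nlinarith [mul_self_nonneg (q * (x - 1))]

/-- The odd power function `sgn(x)|x|^r`: up to the factor `p`, the derivative of `|x|^p` when
`r = p - 1`. -/
noncomputable def signedRpow (r x : ℝ) : ℝ := x * |x| ^ (r - 1)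

@[simp]
lemma signedRpow_neg (r x : ℝ) : signedRpow r (-x) = -signedRpow r x := by
  simp [signedRpow]

lemma signedRpow_of_nonneg {r x : ℝ} (hr : r ≠ 0) (hx : 0 ≤ x) : signedRpow r x = x ^ r := by
  rcases hx.eq_or_lt with rfl | hx
  · simp [signedRpow, hr]
  · rw [signedRpow, abs_of_pos hx, Real.rpow_sub_one hx.ne', mul_div_cancel₀ _ hx.ne']

lemma abs_signedRpow {r : ℝ} (hr : r ≠ 0) (x : ℝ) : |signedRpow r x| = |x| ^ r := by
  rw [← signedRpow_of_nonneg hr (abs_nonneg x), signedRpow, signedRpow, abs_mul, abs_abs,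
    abs_of_nonneg (Real.rpow_nonneg (abs_nonneg x) _)]

lemma signedRpow_mul_self {p : ℝ} (hp : p ≠ 0) (x : ℝ) : signedRpow (p - 1) x * x = |x| ^ p := by
  rcases eq_or_ne x 0 with rfl | hx
  · simp [signedRpow, Real.zero_rpow hp]
  · calc signedRpow (p - 1) x * x = |x| ^ (2 : ℝ) * |x| ^ (p - 1 - 1) := by
          rw [signedRpow, Real.rpow_two, sq_abs]; ring
      _ = |x| ^ p := by rw [← Real.rpow_add (abs_pos.2 hx)]; ring_nf

lemma signedRpow_mul {m : ℝ} (hm : 0 < m) (r x : ℝ) :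
    signedRpow r (m * x) = m ^ r * signedRpow r x := by
  rw [signedRpow, signedRpow, abs_mul, abs_of_pos hm, Real.mul_rpow hm.le (abs_nonneg x),
    Real.rpow_sub_one hm.ne']
  field_simp

lemma abs_rpow_add_mul_signedRpow_le {p : ℝ} (hp : 1 < p) (a c : ℝ) :
    |a| ^ p + p * (signedRpow (p - 1) a * (c - a)) ≤ |c| ^ p := by
  have slope_le : signedRpow (p - 1) a * (c - a) ≤ |a| ^ (p - 1) * (|c| - |a|) := by
    have hself : |a| ^ (p - 1) * |a| = signedRpow (p - 1) a * a := by
      rw [signedRpow_mul_self (by positivity), ← signedRpow_of_nonneg (by linarith) (abs_nonneg a),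
        signedRpow_mul_self (by positivity), abs_abs]
    have hcross : signedRpow (p - 1) a * c ≤ |a| ^ (p - 1) * |c| := by
      rw [← abs_signedRpow (by linarith) a, ← abs_mul]
      exact le_abs_self _
    linarith
  calc |a| ^ p + p * (signedRpow (p - 1) a * (c - a))
      ≤ |a| ^ p + p * |a| ^ (p - 1) * (|c| - |a|) := by
        rw [mul_assoc]; gcongr
    _ ≤ |c| ^ p := rpow_add_mul_rpow_sub_one_le hp.le (abs_nonneg a) (abs_nonneg c)

-- On `x > 0` the derivative is `r` times the gap between `x ^ (r - 1)` and its tangent at `1`.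
lemma monotone_signedRpow_sub_tangent {r : ℝ} (hr0 : 0 < r) (hr1 : r ≤ 1) :
    Monotone fun x ↦ signedRpow r x - r * x + r * (1 - r) * (x * |x| / 2 - x) := by
  have hodd : ∀ x, signedRpow r (-x) - r * -x + r * (1 - r) * (-x * |-x| / 2 - -x) =
      -(signedRpow r x - r * x + r * (1 - r) * (x * |x| / 2 - x)) := fun x ↦ by
    rw [signedRpow_neg, abs_neg]; ring
  refine monotone_of_odd_of_monotoneOn_nonneg hodd ?_
  have hmono : MonotoneOn (fun x ↦ x ^ r - r * x + r * (1 - r) * (x ^ 2 / 2 - x)) (Set.Ici 0) := by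
    refine monotoneOn_of_hasDerivWithinAt_nonneg (convex_Ici 0)
      (f' := fun x ↦ r * x ^ (r - 1) - r * 1 + r * (1 - r) * (2 * x / 2 - 1))
      (Continuous.continuousOn ?_) (fun x hx ↦ ?_) (fun x hx ↦ ?_)
    · have := Real.continuous_rpow_const hr0.le
      fun_prop
    · rw [interior_Ici] at hx
      have hsq : HasDerivAt (fun x : ℝ ↦ x ^ 2) (2 * x) x := by simpa using hasDerivAt_pow 2 x
      exact (((Real.hasDerivAt_rpow_const (Or.inl hx.ne')).sub ((hasDerivAt_id x).const_mul r)).add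
        (((hsq.div_const 2).sub (hasDerivAt_id x)).const_mul (r * (1 - r)))).hasDerivWithinAt
    · rw [interior_Ici] at hx
      have htangent := one_sub_mul_sub_one_le_rpow_neg (sub_nonneg.2 hr1) (by linarith) hx
      rw [neg_sub] at htangent
      nlinarith
  refine hmono.congr fun x hx ↦ ?_
  simp only [signedRpow_of_nonneg hr0.ne' hx, abs_of_nonneg (Set.mem_Ici.1 hx)]
  ring

lemma mul_rpow_mul_sq_le_signedRpow_sub_mul {r m a c : ℝ} (hr0 : 0 < r) (hr1 : r ≤ 1)
    (hm : 0 < m) (hac : |a| + |c| ≤ 2 * m) :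
    r * m ^ (r - 1) * (a - c) ^ 2 ≤ (signedRpow r a - signedRpow r c) * (a - c) := by
  wlog hm1 : m = 1 generalizing m a c
  · have h := this (a := a / m) (c := c / m) one_pos
      (by rw [abs_div, abs_div, abs_of_pos hm, ← add_div, div_le_iff₀ hm]; linarith) rfl
    have hscale (z : ℝ) : signedRpow r z = m ^ r * signedRpow r (z / m) := by
      rw [← signedRpow_mul hm, mul_div_cancel₀ _ hm.ne']
    calc r * m ^ (r - 1) * (a - c) ^ 2
        = m ^ r * m * (r * 1 ^ (r - 1) * (a / m - c / m) ^ 2) := by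
          rw [Real.one_rpow, Real.rpow_sub_one hm.ne']; field_simp
      _ ≤ m ^ r * m * ((signedRpow r (a / m) - signedRpow r (c / m)) * (a / m - c / m)) := by
          gcongr
      _ = (signedRpow r a - signedRpow r c) * (a - c) := by
          rw [hscale a, hscale c]; field_simp
  subst hm1
  wlog hca : c ≤ a generalizing a c
  · linarith [this (a := c) (c := a) (by linarith) (le_of_not_ge hca)]
  have hmono := monotone_signedRpow_sub_tangent hr0 hr1 hca
  have hquad : a * |a| - c * |c| ≤ 2 * (a - c) := by
    cases abs_cases a <;> cases abs_cases c <;> nlinarith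
  have hslope : r * (a - c) ≤ signedRpow r a - signedRpow r c := by
    nlinarith [mul_nonneg hr0.le (sub_nonneg.2 hr1)]
  rw [Real.one_rpow]
  nlinarith

lemma sub_one_mul_sq_mul_rpow_le_signedRpow_sub_mul {p : ℝ} (hp1 : 1 < p) (hp2 : p ≤ 2)
    (a c : ℝ) :
    (p - 1) * ((a - c) ^ 2 * ((|a| ^ p + |c| ^ p) / 2) ^ (-(2 / p - 1))) ≤
      (signedRpow (p - 1) a - signedRpow (p - 1) c) * (a - c) := by
  rcases eq_or_ne a c with rfl | hac
  · simp
  have hT : 0 < (|a| ^ p + |c| ^ p) / 2 := by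
    rcases eq_or_ne a 0 with rfl | ha
    · have := abs_pos.2 hac.symm
      positivity
    · have := abs_pos.2 ha
      positivity
  set T := (|a| ^ p + |c| ^ p) / 2 with hTdef
  have hmean : |a| + |c| ≤ 2 * T ^ (1 / p) := by
    have h := Real.arith_mean_le_rpow_mean univ ![1 / 2, 1 / 2] ![|a|, |c|]
      (by simp [Fin.forall_fin_two]) (by simp [Fin.sum_univ_two]; norm_num)
      (by simp [Fin.forall_fin_two]) hp1.le
    simp only [Fin.sum_univ_two, Matrix.cons_val_zero, Matrix.cons_val_one, ← mul_add] at h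
    rw [hTdef, div_eq_inv_mul, ← one_div]
    linarith
  have h := mul_rpow_mul_sq_le_signedRpow_sub_mul (sub_pos.2 hp1) (by linarith)
    (Real.rpow_pos_of_pos hT (1 / p)) hmean
  rw [← Real.rpow_mul hT.le, show 1 / p * (p - 1 - 1) = -(2 / p - 1) by field_simp; ring] at h
  linarith

lemma add_mul_sq_le_of_forall_step {H : ℝ → ℝ} {c T : ℝ} (hT : 0 ≤ T)
    (step : ∀ t δ, 0 ≤ t → 0 ≤ δ → H t + 2 * c * (t * δ) ≤ H (t + δ)) :
    H 0 + c * T ^ 2 ≤ H T := by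
  have riemann_sum (δ : ℝ) (hδ : 0 ≤ δ) (i : ℕ) : H 0 + c * (i * (i - 1) * δ ^ 2) ≤ H (i * δ) := by
    induction i with
    | zero => simp
    | succ i ih =>
      have := step (i * δ) δ (by positivity) hδ
      push_cast
      rw [add_one_mul (i : ℝ) δ]
      linarith
  have hlim : Filter.Tendsto (fun N : ℕ ↦ H 0 + c * T ^ 2 * (1 - 1 / (N : ℝ))) Filter.atTop
      (nhds (H 0 + c * T ^ 2 * (1 - 0))) :=
    ((tendsto_const_nhds.sub tendsto_one_div_atTop_nhds_zero_nat).const_mul _).const_add _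
  rw [sub_zero, mul_one] at hlim
  refine le_of_tendsto hlim ?_
  filter_upwards [Filter.eventually_gt_atTop 0] with N hN
  have hN' : (N : ℝ) ≠ 0 := by positivity
  calc H 0 + c * T ^ 2 * (1 - 1 / (N : ℝ)) = H 0 + c * (N * (N - 1) * (T / N) ^ 2) := by
        field_simp
    _ ≤ H (N * (T / N)) := riemann_sum _ (by positivity) N
    _ = H T := by rw [mul_div_cancel₀ T hN']

lemma sum_rpow_rpow_le_sum_sq_mul_rpow_neg {κ : Type*} [Fintype κ] {p : ℝ} (hp0 : 0 < p)
    (hp2 : p ≤ 2) {m b : κ → ℝ} (hm : ∀ k, 0 ≤ m k) (hb : ∀ k, 0 ≤ b k)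
    (hmb : ∀ k, b k = 0 → m k = 0) :
    (∑ k, m k ^ p) ^ (2 / p) ≤
      (∑ k, m k ^ 2 * b k ^ (-(2 / p - 1))) * (∑ k, b k) ^ (2 / p - 1) := by
  have hr : 1 ≤ 2 / p := (one_le_div₀ hp0).2 hp2
  have hterm (k : κ) : b k * (m k ^ p / b k) = m k ^ p := by
    rcases eq_or_ne (b k) 0 with h | h
    · simp [hmb k h, h, hp0.ne']
    · field_simp
  have hterm' (k : κ) : b k * (m k ^ p / b k) ^ (2 / p) = m k ^ 2 * b k ^ (-(2 / p - 1)) := by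
    rcases (hb k).eq_or_lt with h | h
    · simp [hmb k h.symm, ← h]
    · rw [Real.div_rpow (Real.rpow_nonneg (hm k) p) h.le, ← Real.rpow_mul (hm k),
        mul_div_cancel₀ _ hp0.ne', Real.rpow_two, neg_sub, Real.rpow_sub h, Real.rpow_one]
      ring
  have hB : 0 ≤ ∑ k, b k := sum_nonneg fun k _ ↦ hb k
  have hS : 0 ≤ ∑ k, m k ^ 2 * b k ^ (-(2 / p - 1)) :=
    sum_nonneg fun k _ ↦ mul_nonneg (sq_nonneg _) (Real.rpow_nonneg (hb k) _)
  have holder := Real.inner_le_weight_mul_Lp_of_nonneg univ hr b (fun k ↦ m k ^ p / b k) hb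
    fun k ↦ div_nonneg (Real.rpow_nonneg (hm k) p) (hb k)
  simp only [hterm, hterm', inv_div] at holder
  calc (∑ k, m k ^ p) ^ (2 / p)
      ≤ ((∑ k, b k) ^ (1 - p / 2) * (∑ k, m k ^ 2 * b k ^ (-(2 / p - 1))) ^ (p / 2)) ^ (2 / p) :=
        Real.rpow_le_rpow (sum_nonneg fun k _ ↦ Real.rpow_nonneg (hm k) p) holder (by positivity)
    _ = (∑ k, m k ^ 2 * b k ^ (-(2 / p - 1))) * (∑ k, b k) ^ (2 / p - 1) := by
        rw [Real.mul_rpow (by positivity) (by positivity), ← Real.rpow_mul hB,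
          ← Real.rpow_mul hS, show p / 2 * (2 / p) = 1 by field_simp,
          show (1 - p / 2) * (2 / p) = 2 / p - 1 by field_simp, Real.rpow_one, mul_comm]

end RealPower

section Resolvent

lemma exists_measure_mul_rpow_neg_eq_integral {α : ℝ} (hα : α ∈ Set.Ioo (0 : ℝ) 1) :
    ∃ ν : Measure ℝ, ∀ M B : ℝ, 0 ≤ B → (B = 0 → M = 0) →
      IntegrableOn (fun s ↦ s ^ (-α) * (M / (s + B))) (Set.Ioi 0) ν ∧
        M * B ^ (-α) = ∫ s in Set.Ioi 0, s ^ (-α) * (M / (s + B)) ∂ν := by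
  have hα' : 1 - α ∈ Set.Ioo (0 : ℝ) 1 := ⟨sub_pos.2 hα.2, sub_lt_self 1 hα.1⟩
  obtain ⟨ν, hν⟩ := Real.exists_measure_rpow_eq_integral_rpowIntegrand₀₁ hα'
  refine ⟨ν, fun M B hB hM ↦ ?_⟩
  have hintegrand : Set.EqOn (fun s ↦ M / B * Real.rpowIntegrand₀₁ (1 - α) s B)
      (fun s ↦ s ^ (-α) * (M / (s + B))) (Set.Ioi 0) := fun s hs ↦ by
    simp only [Real.rpowIntegrand₀₁_eq_pow_div hα' (le_of_lt hs) hB, sub_sub_cancel_left]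
    rcases eq_or_ne B 0 with h | h
    · simp [hM h]
    · field_simp
  rw [← integrableOn_congr_fun hintegrand measurableSet_Ioi,
    ← setIntegral_congr_fun measurableSet_Ioi hintegrand, integral_const_mul, ← (hν B hB).2]
  refine ⟨(hν B hB).1.const_mul _, ?_⟩
  rcases hB.eq_or_lt with h | h
  · simp [hM h.symm]
  · rw [sub_eq_add_neg, Real.rpow_one_add' hB (by linarith [hα.2])]
    field_simp

lemma sum_mul_rpow_neg_le_of_resolvent {ι κ : Type*} [Fintype ι] [Fintype κ] {α : ℝ}
    (hα : α ∈ Set.Ioo (0 : ℝ) 1) {m b : κ → ℝ} {M T : ι → ℝ} (hb : ∀ k, 0 ≤ b k)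
    (hT : ∀ i, 0 ≤ T i) (hmb : ∀ k, b k = 0 → m k = 0) (hMT : ∀ i, T i = 0 → M i = 0)
    (resolvent : ∀ s, 0 < s → ∑ k, m k / (s + b k) ≤ ∑ i, M i / (s + T i)) :
    ∑ k, m k * b k ^ (-α) ≤ ∑ i, M i * T i ^ (-α) := by
  obtain ⟨ν, hν⟩ := exists_measure_mul_rpow_neg_eq_integral hα
  have hm (k : κ) := hν (m k) (b k) (hb k) (hmb k)
  have hM (i : ι) := hν (M i) (T i) (hT i) (hMT i)
  rw [sum_congr rfl fun k _ ↦ (hm k).2, sum_congr rfl fun i _ ↦ (hM i).2,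
    ← integral_finsetSum _ fun k _ ↦ (hm k).1, ← integral_finsetSum _ fun i _ ↦ (hM i).1]
  refine setIntegral_mono_on (integrable_finsetSum _ fun k _ ↦ (hm k).1)
    (integrable_finsetSum _ fun i _ ↦ (hM i).1) measurableSet_Ioi fun s hs ↦ ?_
  rw [← mul_sum, ← mul_sum]
  exact mul_le_mul_of_nonneg_left (resolvent s hs) (Real.rpow_nonneg (le_of_lt hs) _)

end Resolvent

section Compression

variable {ι κ 𝕜 : Type*} [Fintype ι] [Fintype κ] [DecidableEq ι] [DecidableEq κ] [RCLike 𝕜]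

lemma two_mul_re_conj_mul_sub_le (y z : 𝕜) {t : ℝ} (ht : 0 < t) :
    2 * RCLike.re (starRingEnd 𝕜 y * z) - t * ‖z‖ ^ 2 ≤ ‖y‖ ^ 2 / t := by
  have cauchy_schwarz : RCLike.re (starRingEnd 𝕜 y * z) ≤ ‖y‖ * ‖z‖ := by
    simpa using RCLike.re_le_norm (starRingEnd 𝕜 y * z)
  rw [le_div_iff₀ ht]
  nlinarith [sq_nonneg (‖y‖ - t * ‖z‖)]

lemma sum_mul_norm_sq_eq_re_dotProduct (T : ι → ℝ) (w : ι → 𝕜) :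
    ∑ i, T i * ‖w i‖ ^ 2 = RCLike.re (star w ⬝ᵥ (diagonal (fun i ↦ (T i : 𝕜)) *ᵥ w)) := by
  simp only [dotProduct, mulVec_diagonal, map_sum, Pi.star_apply, RCLike.star_def]
  refine sum_congr rfl fun i _ ↦ ?_
  rw [mul_left_comm, RCLike.conj_mul]
  norm_cast

/-- The real diagonal matrix with entries `b` is the compression of the one with entries `T` along
the isometry `V`. Only diagonal compressions are considered, so that functions of both matrices can
be taken entrywise. -/
structure IsDiagonalCompression (V : Matrix ι κ 𝕜) (T : ι → ℝ) (b : κ → ℝ) : Prop where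
  isometry : Vᴴ * V = 1
  compression : Vᴴ * diagonal (fun i ↦ (T i : 𝕜)) * V = diagonal fun k ↦ (b k : 𝕜)

namespace IsDiagonalCompression

variable {V : Matrix ι κ 𝕜} {T : ι → ℝ} {b : κ → ℝ}

lemma star_mulVec_dotProduct_mulVec (h : IsDiagonalCompression V T b) (u v : κ → 𝕜) :
    star (V *ᵥ u) ⬝ᵥ (V *ᵥ v) = star u ⬝ᵥ v := by
  rw [star_mulVec, ← dotProduct_mulVec, mulVec_mulVec, h.isometry, one_mulVec]

lemma sum_mul_norm_sq_mulVec (h : IsDiagonalCompression V T b) (v : κ → 𝕜) :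
    ∑ i, T i * ‖(V *ᵥ v) i‖ ^ 2 = ∑ k, b k * ‖v k‖ ^ 2 := by
  rw [sum_mul_norm_sq_eq_re_dotProduct, sum_mul_norm_sq_eq_re_dotProduct, ← h.compression,
    star_mulVec, ← dotProduct_mulVec, mulVec_mulVec, mulVec_mulVec]

lemma sum_norm_sq_mulVec (h : IsDiagonalCompression V T b) (v : κ → 𝕜) :
    ∑ i, ‖(V *ᵥ v) i‖ ^ 2 = ∑ k, ‖v k‖ ^ 2 := by
  have hone : IsDiagonalCompression V 1 1 := ⟨h.isometry, by simpa using h.isometry⟩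
  simpa using hone.sum_mul_norm_sq_mulVec v

omit [Fintype κ] in
lemma sum_mul_norm_sq_col (h : IsDiagonalCompression V T b) (k : κ) :
    ∑ i, T i * ‖V i k‖ ^ 2 = b k := by
  have hk := congr_fun₂ h.compression k k
  simp only [Matrix.mul_apply (N := V), mul_diagonal, conjTranspose_apply, diagonal_apply_eq,
    mul_comm _ (T _ : 𝕜), mul_assoc, RCLike.star_def, RCLike.conj_mul] at hk
  exact_mod_cast hk

omit [Fintype κ] in
lemma nonneg (h : IsDiagonalCompression V T b) (hT : ∀ i, 0 ≤ T i) (k : κ) : 0 ≤ b k := by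
  rw [← h.sum_mul_norm_sq_col k]
  exact sum_nonneg fun i _ ↦ mul_nonneg (hT i) (sq_nonneg _)

lemma apply_eq_zero (h : IsDiagonalCompression V T b) (hT : ∀ i, 0 ≤ T i) {μ : κ → 𝕜}
    (hμ : ∀ i, T i = 0 → (V *ᵥ μ) i = 0) {k : κ} (hbk : b k = 0) : μ k = 0 := by
  have hcol : ∑ i, T i * ‖V i k‖ ^ 2 = 0 := (h.sum_mul_norm_sq_col k).trans hbk
  rw [sum_eq_zero_iff_of_nonneg fun i _ ↦ mul_nonneg (hT i) (sq_nonneg _)] at hcol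
  calc μ k = (Vᴴ *ᵥ (V *ᵥ μ)) k := by rw [mulVec_mulVec, h.isometry, one_mulVec]
    _ = ∑ i, star (V i k) * (V *ᵥ μ) i := rfl
    _ = 0 := sum_eq_zero fun i hi ↦ by
        rcases mul_eq_zero.1 (hcol i hi) with hTi | hVik
        · rw [hμ i hTi, mul_zero]
        · rw [norm_eq_zero.1 (pow_eq_zero_iff two_ne_zero |>.1 hVik), star_zero, zero_mul]

-- Duality: `‖u‖² / t` is the supremum of `2 re ⟪u, v⟫ - t ‖v‖²` over `v`, attained at `u / t`.
lemma sum_norm_sq_div_le (h : IsDiagonalCompression V T b) (hT : ∀ i, 0 ≤ T i) (μ : κ → 𝕜)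
    {s : ℝ} (hs : 0 < s) :
    ∑ k, ‖μ k‖ ^ 2 / (s + b k) ≤ ∑ i, ‖(V *ᵥ μ) i‖ ^ 2 / (s + T i) := by
  set v : κ → 𝕜 := fun k ↦ ((s + b k)⁻¹ : ℝ) * μ k with hv
  have hsb (k : κ) : 0 < s + b k := add_pos_of_pos_of_nonneg hs (h.nonneg hT k)
  calc ∑ k, ‖μ k‖ ^ 2 / (s + b k)
      = 2 * RCLike.re (star μ ⬝ᵥ v) - (s * ∑ k, ‖v k‖ ^ 2 + ∑ k, b k * ‖v k‖ ^ 2) := by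
        simp only [dotProduct, map_sum, mul_sum, ← sum_add_distrib, ← sum_sub_distrib]
        refine sum_congr rfl fun k _ ↦ ?_
        have hre : RCLike.re (star (μ k) * v k) = (s + b k)⁻¹ * ‖μ k‖ ^ 2 := by
          rw [hv, mul_left_comm, RCLike.re_ofReal_mul, RCLike.star_def, RCLike.conj_mul]
          norm_cast
        have hnorm : ‖v k‖ = (s + b k)⁻¹ * ‖μ k‖ := by
          rw [hv, norm_mul, RCLike.norm_ofReal, abs_of_pos (inv_pos.2 (hsb k))]
        have := (hsb k).ne'
        rw [Pi.star_apply, hre, hnorm]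
        field_simp
        ring
    _ = 2 * RCLike.re (star (V *ᵥ μ) ⬝ᵥ (V *ᵥ v)) -
          (s * ∑ i, ‖(V *ᵥ v) i‖ ^ 2 + ∑ i, T i * ‖(V *ᵥ v) i‖ ^ 2) := by
        rw [h.star_mulVec_dotProduct_mulVec, h.sum_norm_sq_mulVec, h.sum_mul_norm_sq_mulVec]
    _ = ∑ i, (2 * RCLike.re (starRingEnd 𝕜 ((V *ᵥ μ) i) * (V *ᵥ v) i) -
          (s + T i) * ‖(V *ᵥ v) i‖ ^ 2) := by
        simp only [dotProduct, map_sum, mul_sum, ← sum_add_distrib, ← sum_sub_distrib, add_mul,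
          Pi.star_apply, RCLike.star_def]
    _ ≤ ∑ i, ‖(V *ᵥ μ) i‖ ^ 2 / (s + T i) := sum_le_sum fun i _ ↦
        two_mul_re_conj_mul_sub_le _ _ (add_pos_of_pos_of_nonneg hs (hT i))

lemma sum_norm_sq_mul_rpow_neg_le (h : IsDiagonalCompression V T b) {α : ℝ}
    (hα : α ∈ Set.Ico (0 : ℝ) 1) (hT : ∀ i, 0 ≤ T i) {μ : κ → 𝕜}
    (hμ : ∀ i, T i = 0 → (V *ᵥ μ) i = 0) :
    ∑ k, ‖μ k‖ ^ 2 * b k ^ (-α) ≤ ∑ i, ‖(V *ᵥ μ) i‖ ^ 2 * T i ^ (-α) := by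
  rcases hα.1.eq_or_lt with rfl | hα0
  · simp [h.sum_norm_sq_mulVec]
  · exact sum_mul_rpow_neg_le_of_resolvent ⟨hα0, hα.2⟩ (h.nonneg hT) hT
      (fun k hk ↦ by simp [h.apply_eq_zero hT hμ hk]) (fun i hi ↦ by simp [hμ i hi])
      fun s hs ↦ h.sum_norm_sq_div_le hT μ hs

lemma sum_norm_rpow_rpow_le (h : IsDiagonalCompression V T b) {p : ℝ} (hp1 : 1 < p) (hp2 : p ≤ 2)
    (hT : ∀ i, 0 ≤ T i) {μ : κ → 𝕜} (hμ : ∀ i, T i = 0 → (V *ᵥ μ) i = 0) :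
    (∑ k, ‖μ k‖ ^ p) ^ (2 / p) ≤
      (∑ i, ‖(V *ᵥ μ) i‖ ^ 2 * T i ^ (-(2 / p - 1))) * (∑ k, b k) ^ (2 / p - 1) := by
  have hp0 : 0 < p := one_pos.trans hp1
  have hα : 2 / p - 1 ∈ Set.Ico (0 : ℝ) 1 :=
    ⟨sub_nonneg.2 ((one_le_div₀ hp0).2 hp2),
      by rw [sub_lt_iff_lt_add, div_lt_iff₀ hp0]; linarith⟩
  calc (∑ k, ‖μ k‖ ^ p) ^ (2 / p)
      ≤ (∑ k, ‖μ k‖ ^ 2 * b k ^ (-(2 / p - 1))) * (∑ k, b k) ^ (2 / p - 1) :=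
        sum_rpow_rpow_le_sum_sq_mul_rpow_neg hp0 hp2 (fun k ↦ norm_nonneg (μ k)) (h.nonneg hT)
          fun k hk ↦ by rw [h.apply_eq_zero hT hμ hk, norm_zero]
    _ ≤ (∑ i, ‖(V *ᵥ μ) i‖ ^ 2 * T i ^ (-(2 / p - 1))) * (∑ k, b k) ^ (2 / p - 1) :=
        mul_le_mul_of_nonneg_right (h.sum_norm_sq_mul_rpow_neg_le hα hT hμ)
          (Real.rpow_nonneg (sum_nonneg fun k _ ↦ h.nonneg hT k) _)

end IsDiagonalCompression

end Compression

section TraceFormulas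

variable {n 𝕜 : Type*} [Fintype n] [DecidableEq n] [RCLike 𝕜] {A C : Matrix n n 𝕜}

lemma cfc_eq_unitary_mul_diagonal_mul_star (hA : A.IsHermitian) (f : ℝ → ℝ) :
    cfc f A = hA.eigenvectorUnitary * diagonal (fun i ↦ (f (hA.eigenvalues i) : 𝕜)) *
      star (hA.eigenvectorUnitary : Matrix n n 𝕜) := by
  rw [hA.cfc_eq, IsHermitian.cfc, Unitary.conjStarAlgAut_apply]
  rfl

lemma re_trace_cfc (hA : A.IsHermitian) (f : ℝ → ℝ) :
    RCLike.re (cfc f A).trace = ∑ i, f (hA.eigenvalues i) := by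
  rw [cfc_eq_unitary_mul_diagonal_mul_star hA, trace_mul_comm, ← Matrix.mul_assoc]
  simp [trace_diagonal]

lemma cfc_mul_self (hA : A.IsHermitian) (f : ℝ → ℝ) :
    cfc f A * A = cfc (fun x ↦ f x * x) A := by
  have hcont (g : ℝ → ℝ) : ContinuousOn g (spectrum ℝ A) := finite_real_spectrum.continuousOn g
  rw [cfc_mul f (fun x ↦ x) A (hcont _) (hcont _), cfc_id' ℝ A hA.isSelfAdjoint]

/-- The unitary matrix of inner products between an eigenbasis of `A` (rows) and one of `C`
(columns). The squared norms of its entries are the weights in the trace formulas for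
functions of `A` and `C`. -/
noncomputable def eigenbasisChange (hA : A.IsHermitian) (hC : C.IsHermitian) :
    unitaryGroup n 𝕜 :=
  star hA.eigenvectorUnitary * hC.eigenvectorUnitary

lemma sum_norm_sq_row_unitary (U : unitaryGroup n 𝕜) (i : n) :
    ∑ j, ‖(U : Matrix n n 𝕜) i j‖ ^ 2 = 1 := by
  have h := congr_fun₂ (mem_unitaryGroup_iff.1 U.2) i i
  simp only [mul_apply, star_apply, RCLike.star_def, RCLike.mul_conj, one_apply_eq] at h
  exact_mod_cast h

lemma sum_norm_sq_col_unitary (U : unitaryGroup n 𝕜) (j : n) :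
    ∑ i, ‖(U : Matrix n n 𝕜) i j‖ ^ 2 = 1 := by
  simpa using sum_norm_sq_row_unitary (star U) j

lemma re_trace_cfc_mul_cfc (hA : A.IsHermitian) (hC : C.IsHermitian) (f g : ℝ → ℝ) :
    RCLike.re (cfc f A * cfc g C).trace = ∑ i, ∑ j, f (hA.eigenvalues i) * g (hC.eigenvalues j) *
      ‖(eigenbasisChange hA hC : Matrix n n 𝕜) i j‖ ^ 2 := by
  set W : Matrix n n 𝕜 := ↑(eigenbasisChange hA hC) with hW
  have hcycle : (cfc f A * cfc g C).trace =
      (diagonal (fun i ↦ (f (hA.eigenvalues i) : 𝕜)) *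
        (W * diagonal (fun j ↦ (g (hC.eigenvalues j) : 𝕜)) * star W)).trace := by
    rw [cfc_eq_unitary_mul_diagonal_mul_star hA, cfc_eq_unitary_mul_diagonal_mul_star hC,
      Matrix.mul_assoc, Matrix.mul_assoc, trace_mul_comm, hW, eigenbasisChange]
    simp only [Submonoid.coe_mul, star_mul, Unitary.coe_star, star_star, Matrix.mul_assoc]
  rw [hcycle]
  simp only [trace, diag_apply, diagonal_mul, map_sum]
  simp only [Matrix.mul_apply (N := star W), mul_diagonal, Matrix.star_apply, map_sum, mul_sum,
    RCLike.star_def]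
  refine sum_congr rfl fun i _ ↦ sum_congr rfl fun j _ ↦ ?_
  rw [mul_right_comm (W i j), RCLike.mul_conj]
  norm_cast
  ring

lemma re_trace_cfc_left (hA : A.IsHermitian) (hC : C.IsHermitian) (f : ℝ → ℝ) :
    RCLike.re (cfc f A).trace = ∑ i, ∑ j, f (hA.eigenvalues i) *
      ‖(eigenbasisChange hA hC : Matrix n n 𝕜) i j‖ ^ 2 := by
  simp_rw [← mul_sum, sum_norm_sq_row_unitary, mul_one, re_trace_cfc hA]

lemma re_trace_cfc_right (hA : A.IsHermitian) (hC : C.IsHermitian) (g : ℝ → ℝ) :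
    RCLike.re (cfc g C).trace = ∑ i, ∑ j, g (hC.eigenvalues j) *
      ‖(eigenbasisChange hA hC : Matrix n n 𝕜) i j‖ ^ 2 := by
  rw [sum_comm]
  simp_rw [← mul_sum, sum_norm_sq_col_unitary, mul_one, re_trace_cfc hC]

lemma re_trace_cfc_mul_sub (hA : A.IsHermitian) (hC : C.IsHermitian) (f : ℝ → ℝ) :
    RCLike.re (cfc f A * (C - A)).trace = ∑ i, ∑ j,
      f (hA.eigenvalues i) * (hC.eigenvalues j - hA.eigenvalues i) *
      ‖(eigenbasisChange hA hC : Matrix n n 𝕜) i j‖ ^ 2 := by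
  have hcross := re_trace_cfc_mul_cfc hA hC f fun x ↦ x
  rw [cfc_id' ℝ C hC.isSelfAdjoint] at hcross
  rw [Matrix.mul_sub, trace_sub, map_sub, hcross, cfc_mul_self hA, re_trace_cfc_left hA hC]
  simp only [← sum_sub_distrib, mul_sub, sub_mul]

lemma re_trace_cfc_sub_cfc_mul_sub (hA : A.IsHermitian) (hC : C.IsHermitian) (f : ℝ → ℝ) :
    RCLike.re ((cfc f A - cfc f C) * (A - C)).trace = ∑ i, ∑ j,
      (f (hA.eigenvalues i) - f (hC.eigenvalues j)) * (hA.eigenvalues i - hC.eigenvalues j) *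
      ‖(eigenbasisChange hA hC : Matrix n n 𝕜) i j‖ ^ 2 := by
  have hcross := re_trace_cfc_mul_cfc hA hC (fun x ↦ x) f
  rw [cfc_id' ℝ A hA.isSelfAdjoint, trace_mul_comm] at hcross
  have hsplit : (cfc f A - cfc f C) * (A - C) =
      cfc f C * C - cfc f C * A - cfc f A * (C - A) := by noncomm_ring
  rw [hsplit, trace_sub, trace_sub, map_sub, map_sub, hcross, re_trace_cfc_mul_sub hA hC,
    cfc_mul_self hC, re_trace_cfc_right hA hC]
  simp only [← sum_sub_distrib]
  exact sum_congr rfl fun i _ ↦ sum_congr rfl fun j _ ↦ by ring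

lemma eigenbasisChange_mul_diagonal_mul_eigenbasisChange (hA : A.IsHermitian) (hC : C.IsHermitian)
    (hAC : (A - C).IsHermitian) (i j : n) :
    (eigenbasisChange hA hAC * diagonal (fun k ↦ (hAC.eigenvalues k : 𝕜)) *
        (eigenbasisChange hAC hC : Matrix n n 𝕜)) i j =
      ((hA.eigenvalues i - hC.eigenvalues j : ℝ) : 𝕜) *
        (eigenbasisChange hA hC : Matrix n n 𝕜) i j := by
  have diagonalize {B : Matrix n n 𝕜} (hB : B.IsHermitian) :
      hB.eigenvectorUnitary * diagonal (fun i ↦ (hB.eigenvalues i : 𝕜)) *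
        star (hB.eigenvectorUnitary : Matrix n n 𝕜) = B := by
    rw [← cfc_eq_unitary_mul_diagonal_mul_star hB fun x ↦ x, cfc_id' ℝ B hB.isSelfAdjoint]
  have left : star (hA.eigenvectorUnitary : Matrix n n 𝕜) * A =
      diagonal (fun i ↦ (hA.eigenvalues i : 𝕜)) * star (hA.eigenvectorUnitary : Matrix n n 𝕜) := by
    nth_rw 2 [← diagonalize hA]
    simp [← Matrix.mul_assoc]
  have right : C * hC.eigenvectorUnitary =
      hC.eigenvectorUnitary * diagonal (fun i ↦ (hC.eigenvalues i : 𝕜)) := by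
    nth_rw 1 [← diagonalize hC]
    simp [Matrix.mul_assoc]
  have hmatrix : eigenbasisChange hA hAC * diagonal (fun k ↦ (hAC.eigenvalues k : 𝕜)) *
        (eigenbasisChange hAC hC : Matrix n n 𝕜) =
      diagonal (fun i ↦ (hA.eigenvalues i : 𝕜)) * eigenbasisChange hA hC -
        eigenbasisChange hA hC * diagonal (fun j ↦ (hC.eigenvalues j : 𝕜)) := by
    calc _ = star (hA.eigenvectorUnitary : Matrix n n 𝕜) * (A - C) * hC.eigenvectorUnitary := by
          conv_rhs => rw [← diagonalize hAC]
          simp only [eigenbasisChange, Submonoid.coe_mul, Unitary.coe_star, Matrix.mul_assoc]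
      _ = _ := by
          rw [Matrix.mul_sub, Matrix.sub_mul, left, Matrix.mul_assoc _ C, right]
          simp only [eigenbasisChange, Submonoid.coe_mul, Unitary.coe_star, Matrix.mul_assoc]
  rw [hmatrix, Matrix.sub_apply, diagonal_mul, mul_diagonal]
  push_cast
  ring

end TraceFormulas

section StrongMonotonicity

variable {n 𝕜 : Type*} [Fintype n] [DecidableEq n] [RCLike 𝕜]

/-- The matrix of the linear map `v ↦ P * diagonal v * Q`, where square matrices are regarded as
vectors indexed by pairs. -/
def sandwichMatrix (P Q : Matrix n n 𝕜) : Matrix (n × n) n 𝕜 := of fun ij k ↦ P ij.1 k * Q k ij.2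

lemma sandwichMatrix_mulVec (P Q : Matrix n n 𝕜) (v : n → 𝕜) (i j : n) :
    (sandwichMatrix P Q *ᵥ v) (i, j) = (P * diagonal v * Q) i j := by
  rw [Matrix.mul_apply]
  simp only [mul_diagonal, sandwichMatrix, mulVec, dotProduct, of_apply, mul_right_comm]

lemma conjTranspose_sandwichMatrix_mul_diagonal_mul (P Q : Matrix n n 𝕜) (s r : n → ℝ) (k l : n) :
    ((sandwichMatrix P Q)ᴴ * diagonal (fun ij : n × n ↦ ((s ij.1 * r ij.2 : ℝ) : 𝕜)) *
        sandwichMatrix P Q) k l =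
      (∑ i, s i * (star (P i k) * P i l)) * ∑ j, r j * (Q l j * star (Q k j)) := by
  rw [Matrix.mul_apply, sum_mul_sum, Fintype.sum_prod_type]
  refine sum_congr rfl fun i _ ↦ sum_congr rfl fun j _ ↦ ?_
  rw [mul_diagonal, conjTranspose_apply, sandwichMatrix, of_apply, of_apply, star_mul]
  push_cast
  ring

lemma isDiagonalCompression_sandwichMatrix (P Q : unitaryGroup n 𝕜) (s r : n → ℝ) :
    IsDiagonalCompression (sandwichMatrix (P : Matrix n n 𝕜) Q) (fun ij ↦ s ij.1 + r ij.2)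
      (fun k ↦ ∑ i, s i * ‖(P : Matrix n n 𝕜) i k‖ ^ 2 +
        ∑ j, r j * ‖(Q : Matrix n n 𝕜) k j‖ ^ 2) := by
  have hP (k l : n) : ∑ i, star ((P : Matrix n n 𝕜) i k) * (P : Matrix n n 𝕜) i l =
      (1 : Matrix n n 𝕜) k l := by
    rw [← mem_unitaryGroup_iff'.1 P.2, Matrix.mul_apply]; rfl
  have hQ (k l : n) : ∑ j, (Q : Matrix n n 𝕜) l j * star ((Q : Matrix n n 𝕜) k j) =
      (1 : Matrix n n 𝕜) l k := by
    rw [← mem_unitaryGroup_iff.1 Q.2, Matrix.mul_apply]; rfl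
  have hcompr := conjTranspose_sandwichMatrix_mul_diagonal_mul (P : Matrix n n 𝕜) Q
  constructor
  · ext k l
    have h := hcompr 1 1 k l
    simp only [Pi.one_apply, mul_one, RCLike.ofReal_one, diagonal_one, Matrix.mul_one, one_mul,
      hP, hQ] at h
    rw [h]
    rcases eq_or_ne k l with rfl | hkl <;> simp [*]
  · have hsplit : (diagonal fun ij : n × n ↦ ((s ij.1 + r ij.2 : ℝ) : 𝕜)) =
        diagonal (fun ij ↦ ((s ij.1 * (1 : n → ℝ) ij.2 : ℝ) : 𝕜)) +
          diagonal (fun ij ↦ (((1 : n → ℝ) ij.1 * r ij.2 : ℝ) : 𝕜)) := by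
      simp [diagonal_add]
    ext k l
    rw [hsplit, Matrix.mul_add, Matrix.add_mul, Matrix.add_apply, hcompr, hcompr]
    simp only [Pi.one_apply, RCLike.ofReal_one, one_mul, hP, hQ]
    rcases eq_or_ne k l with rfl | hkl
    · simp [RCLike.mul_conj, RCLike.conj_mul]
    · simp [hkl, hkl.symm]

/-- The trace of `|A|^p` for a Hermitian matrix `A`, with junk value `0` otherwise. -/
noncomputable def tracePow (p : ℝ) (A : Matrix n n 𝕜) : ℝ :=
  RCLike.re (cfc (fun x : ℝ ↦ |x| ^ p) A).trace

variable {A C : Matrix n n 𝕜}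

lemma tracePow_eq_sum_eigenvalues (hA : A.IsHermitian) (p : ℝ) :
    tracePow p A = ∑ i, |hA.eigenvalues i| ^ p :=
  re_trace_cfc hA _

lemma tracePow_nonneg (hA : A.IsHermitian) (p : ℝ) : 0 ≤ tracePow p A := by
  rw [tracePow_eq_sum_eigenvalues hA]
  positivity

lemma tracePow_smul (hA : A.IsHermitian) (p c : ℝ) :
    tracePow p (c • A) = |c| ^ p * tracePow p A := by
  rw [tracePow, ← cfc_comp_smul c (fun x : ℝ ↦ |x| ^ p) A
    (((finite_real_spectrum (A := A)).image _).continuousOn _) hA.isSelfAdjoint, re_trace_cfc hA,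
    tracePow_eq_sum_eigenvalues hA, mul_sum]
  simp only [smul_eq_mul, abs_mul, Real.mul_rpow (abs_nonneg _) (abs_nonneg _)]

lemma tracePow_add_mul_re_trace_le {p : ℝ} (hp : 1 < p) (hA : A.IsHermitian)
    (hC : C.IsHermitian) :
    tracePow p A + p * RCLike.re (cfc (signedRpow (p - 1)) A * (C - A)).trace ≤ tracePow p C := by
  rw [tracePow, tracePow, re_trace_cfc_left hA hC, re_trace_cfc_right hA hC,
    re_trace_cfc_mul_sub hA hC]
  simp only [mul_sum, ← sum_add_distrib, ← mul_assoc, ← add_mul]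
  refine sum_le_sum fun i _ ↦ sum_le_sum fun j _ ↦ mul_le_mul_of_nonneg_right ?_ (sq_nonneg _)
  rw [mul_assoc]
  exact abs_rpow_add_mul_signedRpow_le hp _ _

lemma tracePow_sub_rpow_le {p : ℝ} (hp1 : 1 < p) (hp2 : p ≤ 2) (hA : A.IsHermitian)
    (hC : C.IsHermitian) :
    tracePow p (A - C) ^ (2 / p) ≤
      (∑ i, ∑ j, (hA.eigenvalues i - hC.eigenvalues j) ^ 2 *
        ((|hA.eigenvalues i| ^ p + |hC.eigenvalues j| ^ p) / 2) ^ (-(2 / p - 1)) *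
        ‖(eigenbasisChange hA hC : Matrix n n 𝕜) i j‖ ^ 2) *
      ((tracePow p A + tracePow p C) / 2) ^ (2 / p - 1) := by
  have hAC : (A - C).IsHermitian := hA.sub hC
  set P := eigenbasisChange hA hAC
  set Q := eigenbasisChange hAC hC
  let s : n → ℝ := fun i ↦ |hA.eigenvalues i| ^ p / 2
  let r : n → ℝ := fun j ↦ |hC.eigenvalues j| ^ p / 2
  have hs (i : n) : 0 ≤ s i := by positivity
  have hr (j : n) : 0 ≤ r j := by positivity
  have hentry (ij : n × n) :
      (sandwichMatrix (P : Matrix n n 𝕜) Q *ᵥ fun k ↦ (hAC.eigenvalues k : 𝕜)) ij =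
        ((hA.eigenvalues ij.1 - hC.eigenvalues ij.2 : ℝ) : 𝕜) *
          (eigenbasisChange hA hC : Matrix n n 𝕜) ij.1 ij.2 :=
    (sandwichMatrix_mulVec _ _ _ _ _).trans
      (eigenbasisChange_mul_diagonal_mul_eigenbasisChange hA hC hAC _ _)
  have hker (ij : n × n) (hij : s ij.1 + r ij.2 = 0) :
      (sandwichMatrix (P : Matrix n n 𝕜) Q *ᵥ fun k ↦ (hAC.eigenvalues k : 𝕜)) ij = 0 := by
    have h := (add_eq_zero_iff_of_nonneg (hs _) (hr _)).1 hij
    have hp : p ≠ 0 := by positivity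
    simp only [s, r, div_eq_zero_iff, Real.rpow_eq_zero (abs_nonneg _) hp, abs_eq_zero,
      OfNat.ofNat_ne_zero, or_false] at h
    rw [hentry, h.1, h.2, sub_zero, RCLike.ofReal_zero, zero_mul]
  have hmass : ∑ k, (∑ i, s i * ‖(P : Matrix n n 𝕜) i k‖ ^ 2 +
      ∑ j, r j * ‖(Q : Matrix n n 𝕜) k j‖ ^ 2) = (tracePow p A + tracePow p C) / 2 := by
    rw [sum_add_distrib, sum_comm, sum_comm (f := fun k j ↦ r j * _)]
    simp only [← mul_sum, sum_norm_sq_row_unitary, sum_norm_sq_col_unitary, mul_one, s, r,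
      ← sum_div, ← add_div, tracePow_eq_sum_eigenvalues hA, tracePow_eq_sum_eigenvalues hC]
  have h := (isDiagonalCompression_sandwichMatrix P Q s r).sum_norm_rpow_rpow_le hp1 hp2
    (fun ij ↦ add_nonneg (hs _) (hr _)) hker
  simp only [hmass, hentry, Fintype.sum_prod_type, norm_mul, RCLike.norm_ofReal, mul_pow, sq_abs,
    s, r, ← add_div] at h
  simpa only [tracePow_eq_sum_eigenvalues hAC, mul_right_comm] using h

lemma sub_one_mul_tracePow_sub_rpow_le {p : ℝ} (hp1 : 1 < p) (hp2 : p ≤ 2) (hA : A.IsHermitian)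
    (hC : C.IsHermitian) :
    (p - 1) * tracePow p (A - C) ^ (2 / p) ≤
      RCLike.re ((cfc (signedRpow (p - 1)) A - cfc (signedRpow (p - 1)) C) * (A - C)).trace *
        ((tracePow p A + tracePow p C) / 2) ^ (2 / p - 1) := by
  have hmean : 0 ≤ (tracePow p A + tracePow p C) / 2 := by
    linarith [tracePow_nonneg hA p, tracePow_nonneg hC p]
  refine (mul_le_mul_of_nonneg_left (tracePow_sub_rpow_le hp1 hp2 hA hC)
    (sub_nonneg.2 hp1.le)).trans ?_
  rw [← mul_assoc, re_trace_cfc_sub_cfc_mul_sub hA hC]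
  refine mul_le_mul_of_nonneg_right ?_ (Real.rpow_nonneg hmean _)
  simp only [mul_sum]
  refine sum_le_sum fun i _ ↦ sum_le_sum fun j _ ↦ ?_
  rw [← mul_assoc]
  exact mul_le_mul_of_nonneg_right (sub_one_mul_sq_mul_rpow_le_signedRpow_sub_mul hp1 hp2 _ _)
    (sq_nonneg _)

end StrongMonotonicity

section Convexity

variable {n 𝕜 : Type*} [RCLike 𝕜] {x y : Matrix n n 𝕜} {p : ℝ}

lemma isHermitian_add_smul (hx : x.IsHermitian) (hy : y.IsHermitian) (t : ℝ) :
    (x + t • y).IsHermitian :=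
  hx.add ((IsSelfAdjoint.all t).smul hy.isSelfAdjoint)

lemma isHermitian_sub_smul (hx : x.IsHermitian) (hy : y.IsHermitian) (t : ℝ) :
    (x - t • y).IsHermitian :=
  hx.sub ((IsSelfAdjoint.all t).smul hy.isSelfAdjoint)

variable [Fintype n] [DecidableEq n]

/-- The mean of `tr |x + t y|^p` and `tr |x - t y|^p`. -/
noncomputable def symmTracePow (p : ℝ) (x y : Matrix n n 𝕜) (t : ℝ) : ℝ :=
  (tracePow p (x + t • y) + tracePow p (x - t • y)) / 2

lemma symmTracePow_nonneg (hx : x.IsHermitian) (hy : y.IsHermitian) (p t : ℝ) :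
    0 ≤ symmTracePow p x y t := by
  have hplus := tracePow_nonneg (isHermitian_add_smul hx hy t) p
  have hminus := tracePow_nonneg (isHermitian_sub_smul hx hy t) p
  rw [symmTracePow]
  positivity

/-- `2 / p` times the derivative of `symmTracePow p x y`. -/
noncomputable def symmTracePowSlope (p : ℝ) (x y : Matrix n n 𝕜) (t : ℝ) : ℝ :=
  RCLike.re ((cfc (signedRpow (p - 1)) (x + t • y) -
    cfc (signedRpow (p - 1)) (x - t • y)) * y).trace

lemma symmTracePow_add_mul_slope_le (hp : 1 < p) (hx : x.IsHermitian) (hy : y.IsHermitian)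
    (t δ : ℝ) :
    symmTracePow p x y t + p / 2 * (δ * symmTracePowSlope p x y t) ≤
      symmTracePow p x y (t + δ) := by
  have hplus := tracePow_add_mul_re_trace_le hp (isHermitian_add_smul hx hy t)
    (isHermitian_add_smul hx hy (t + δ))
  have hminus := tracePow_add_mul_re_trace_le hp (isHermitian_sub_smul hx hy t)
    (isHermitian_sub_smul hx hy (t + δ))
  have hstep_plus : x + (t + δ) • y - (x + t • y) = δ • y := by module
  have hstep_minus : x - (t + δ) • y - (x - t • y) = -(δ • y) := by module
  rw [hstep_plus, Matrix.mul_smul, trace_smul, RCLike.smul_re] at hplus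
  rw [hstep_minus, Matrix.mul_neg, Matrix.mul_smul, trace_neg, trace_smul, map_neg,
    RCLike.smul_re] at hminus
  rw [symmTracePow, symmTracePow, symmTracePowSlope, Matrix.sub_mul, trace_sub, map_sub]
  linarith

lemma mul_tracePow_rpow_le_slope_mul (hp1 : 1 < p) (hp2 : p ≤ 2) (hx : x.IsHermitian)
    (hy : y.IsHermitian) {t : ℝ} (ht : 0 ≤ t) :
    2 * ((p - 1) * tracePow p y ^ (2 / p)) * t ≤
      symmTracePowSlope p x y t * symmTracePow p x y t ^ (2 / p - 1) := by
  rcases ht.eq_or_lt with rfl | ht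
  · simp [symmTracePowSlope]
  have hdiff : x + t • y - (x - t • y) = (2 * t) • y := by module
  have hscale : tracePow p ((2 * t) • y) ^ (2 / p) = (2 * t) ^ 2 * tracePow p y ^ (2 / p) := by
    rw [tracePow_smul hy, Real.mul_rpow (by positivity) (tracePow_nonneg hy p),
      ← Real.rpow_mul (abs_nonneg _), mul_div_cancel₀ _ (by positivity), Real.rpow_two, sq_abs]
  have h := sub_one_mul_tracePow_sub_rpow_le hp1 hp2 (isHermitian_add_smul hx hy t)
    (isHermitian_sub_smul hx hy t)
  rw [hdiff, hscale, Matrix.mul_smul, trace_smul, RCLike.smul_re] at h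
  refine le_of_mul_le_mul_left ?_ (by positivity : 0 < 2 * t)
  calc _ = (p - 1) * ((2 * t) ^ 2 * tracePow p y ^ (2 / p)) := by ring
    _ ≤ _ := h
    _ = _ := mul_assoc _ _ _

lemma symmTracePow_rpow_add_mul_le (hp1 : 1 < p) (hp2 : p ≤ 2) (hx : x.IsHermitian)
    (hy : y.IsHermitian) {t δ : ℝ} (ht : 0 ≤ t) (hδ : 0 ≤ δ) :
    symmTracePow p x y t ^ (2 / p) + 2 * ((p - 1) * tracePow p y ^ (2 / p)) * (t * δ) ≤
      symmTracePow p x y (t + δ) ^ (2 / p) := by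
  have htangent := rpow_add_mul_rpow_sub_one_le ((one_le_div (by positivity)).2 hp2)
    (symmTracePow_nonneg hx hy p t) (symmTracePow_nonneg hx hy p (t + δ))
  have hslope := mul_tracePow_rpow_le_slope_mul hp1 hp2 hx hy ht
  have hincrement : p / 2 * (δ * symmTracePowSlope p x y t) ≤
      symmTracePow p x y (t + δ) - symmTracePow p x y t :=
    le_sub_iff_add_le'.2 (symmTracePow_add_mul_slope_le hp1 hx hy t δ)
  set F := symmTracePow p x y t
  have hF : 0 ≤ F ^ (2 / p - 1) := Real.rpow_nonneg (symmTracePow_nonneg hx hy p t) _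
  calc F ^ (2 / p) + 2 * ((p - 1) * tracePow p y ^ (2 / p)) * (t * δ)
      = F ^ (2 / p) + δ * (2 * ((p - 1) * tracePow p y ^ (2 / p)) * t) := by ring
    _ ≤ F ^ (2 / p) + δ * (symmTracePowSlope p x y t * F ^ (2 / p - 1)) := by gcongr
    _ = F ^ (2 / p) + 2 / p * F ^ (2 / p - 1) * (p / 2 * (δ * symmTracePowSlope p x y t)) := by
        field_simp
    _ ≤ F ^ (2 / p) + 2 / p * F ^ (2 / p - 1) * (symmTracePow p x y (t + δ) - F) := by gcongr
    _ ≤ _ := htangent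

lemma symmTracePow_zero (p : ℝ) (x y : Matrix n n 𝕜) : symmTracePow p x y 0 = tracePow p x := by
  simp [symmTracePow]

/-- The Schatten `p`-norm of a Hermitian matrix, with junk value `0 ^ (1 / p)` otherwise. -/
noncomputable def schattenNorm (p : ℝ) (A : Matrix n n 𝕜) : ℝ := tracePow p A ^ (1 / p)

lemma schattenNorm_sq (hx : x.IsHermitian) (p : ℝ) :
    schattenNorm p x ^ 2 = tracePow p x ^ (2 / p) := by
  rw [schattenNorm, ← Real.rpow_mul_natCast (tracePow_nonneg hx p)]
  congr 1
  push_cast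
  ring

theorem bcl_matrix_le_two_general (hp1 : 1 < p) (hp2 : p ≤ 2) (hx : x.IsHermitian)
    (hy : y.IsHermitian) :
    2 * schattenNorm p x ^ 2 + 2 * (p - 1) * schattenNorm p y ^ 2 ≤
      schattenNorm p (x + y) ^ 2 + schattenNorm p (x - y) ^ 2 := by
  have hgrowth := add_mul_sq_le_of_forall_step zero_le_one fun t δ ht hδ ↦
    symmTracePow_rpow_add_mul_le hp1 hp2 hx hy ht hδ
  have hconvex : symmTracePow p x y 1 ^ (2 / p) ≤
      (tracePow p (x + y) ^ (2 / p) + tracePow p (x - y) ^ (2 / p)) / 2 := by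
    have h := (convexOn_rpow ((one_le_div (by positivity)).2 hp2)).2
      (tracePow_nonneg (hx.add hy) p) (tracePow_nonneg (hx.sub hy) p)
      (by norm_num : (0 : ℝ) ≤ 1 / 2) (by norm_num : (0 : ℝ) ≤ 1 / 2) (by norm_num)
    simpa only [symmTracePow, one_smul, smul_eq_mul, one_div_mul_eq_div, ← add_div] using h
  rw [symmTracePow_zero] at hgrowth
  rw [schattenNorm_sq hx, schattenNorm_sq hy, schattenNorm_sq (hx.add hy),
    schattenNorm_sq (hx.sub hy)]
  linarith

end Convexity

lemma hermitianSchattenNorm_eq_schattenNorm {n : ℕ} {a : Matrix (Fin n) (Fin n) ℂ}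
    (ha : a.IsHermitian) (p : ℝ) : hermitianSchattenNorm p a = schattenNorm p a := by
  rw [hermitianSchattenNorm, dif_pos ha, schattenNorm, tracePow_eq_sum_eigenvalues ha]

/-- **Ball–Carlen–Lieb convexity inequality** for Hermitian matrices, `1 < p ≤ 2`:
`‖x+y‖_p² + ‖x−y‖_p² ≥ 2‖x‖_p² + 2(p−1)‖y‖_p²`. -/
theorem bcl_matrix_le_two {n : ℕ} (hn : 1 ≤ n) (p : ℝ) (hp1 : 1 < p) (hp2 : p ≤ 2)
    (x y : Matrix (Fin n) (Fin n) ℂ) (hx : x.IsHermitian) (hy : y.IsHermitian) :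
    hermitianSchattenNorm p (x + y) ^ 2 + hermitianSchattenNorm p (x - y) ^ 2
    ≥ 2 * hermitianSchattenNorm p x ^ 2 + 2 * (p - 1) * hermitianSchattenNorm p y ^ 2 := by
  simpa only [hermitianSchattenNorm_eq_schattenNorm, hx, hy, hx.add hy, hx.sub hy] using
    bcl_matrix_le_two_general hp1 hp2 hx hy
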